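/- arXiv:2601.16966 — 2 statements merged into one kernel-verified Lean document; each statement's English description precedes it below -/
import Mathlib

section
/- Let n, k be integers with n/2 ≤ k ≤ n-12, and let s_{n,k} ∈ (0,1) be the unique zero of the function s ↦ ₂F₁((n-1)/2, -1/2; k/2; s). Then either s_{n,k} < k/n, or (n·s_{n,k} - k)² ≤ 2n·(1 - s_{n,k}). -/
/-!
The proof is a Sturm comparison for the Gauss equation
`s (1 - s) F'' + (k - n s) / 2 * F' + (n - 1) / 4 * F = 0`, which `F = ₂F₁((n-1)/2, -1/2; k/2; ·)`
satisfies on `(-1, 1)` (`hyp_facts`); multiplied by the weight `s^(k/2-1) (1-s)^((n-k)/2-1)`, its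
differential operator becomes self-adjoint.

Write `n - k = 2 (r² + r)`, so that `r ≥ 2` is equivalent to `n - k ≥ 12`, and `z = n (1 - s) / 2`.
The quantity `(n s - k)² - 2 n (1 - s)` vanishes, with `n s > k`, exactly at the point `σ` where
`z = r²`. If the conclusion failed, the zero `s₀` would lie to the right of `σ`, so `F`, which is
decreasing, would be positive on `[0, σ]`. This is refuted (`not_pos`) with an explicit comparison
function `G = z^(1/2) (g₁ + g₂/z + g₃/z² + g₄/z³)`, modelled on the expansion at infinity of the
solution of the confluent limit equation `n → ∞`. Its coefficients (`exists_coeffs`) are chosen so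
that the Gauss operator applied to `G` is a positive multiple of
`z^(-7/2) (E (z - r² - 2 r)² - (1 - s) (4 g₂ z² + 16 g₃ z + 36 g₄))`, which is nonnegative. Hence
the weighted Wronskian `s^(k/2) (1 - s)^((n-k)/2) (F G' - F' G)` is increasing on `[0, σ]`. It
vanishes at `0`, while at `σ` it is negative because `F > 0`, `F' ≤ 0`, `G ≤ 0` and `G' < 0` there.

All inequalities on the coefficients are polynomial inequalities in `r`; after the substitution
`r = 2 + h` every coefficient has the right sign.
-/

/-- The Gauss hypergeometric function `₂F₁(a,b;c;s)`, defined by its power series. -/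
noncomputable def hyp2F1 (a b c s : ℝ) : ℝ :=
  ∑' m : ℕ, ((ascPochhammer ℝ m).eval a * (ascPochhammer ℝ m).eval b)
    / ((ascPochhammer ℝ m).eval c * (m.factorial : ℝ)) * s ^ m

open Filter Topology Set

/-! ### Power series whose coefficient ratio tends to `1` -/

/-- Coefficient sequences without zeros whose consecutive ratio tends to `1`. Their power series
converge on `(-1, 1)`, and the class is stable under termwise differentiation. -/
def RatioOne (a : ℕ → ℝ) : Prop :=
  (∀ m, a m ≠ 0) ∧ Tendsto (fun m => a (m + 1) / a m) atTop (𝓝 1)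

/-- The coefficients of the termwise derivative of `∑ a m * s ^ m`. -/
def dcoef (a : ℕ → ℝ) (m : ℕ) : ℝ := ((m : ℝ) + 1) * a (m + 1)

lemma RatioOne.summable {a : ℕ → ℝ} (ha : RatioOne a) {s : ℝ} (hs : |s| < 1) :
    Summable (fun m => |a m * s ^ m|) := by
  rcases eq_or_ne s 0 with rfl | h0
  · apply summable_of_ne_finset_zero (s := {0})
    intro m hm
    have : m ≠ 0 := by simpa using hm
    simp [this]
  · refine summable_of_ratio_test_tendsto_lt_one hs
      (Eventually.of_forall fun m => abs_ne_zero.mpr (mul_ne_zero (ha.1 m) (pow_ne_zero _ h0))) ?_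
    have h1 : Tendsto (fun m => |a (m + 1) / a m| * |s|) atTop (𝓝 (|1| * |s|)) :=
      (ha.2.abs).mul_const _
    rw [abs_one, one_mul] at h1
    refine h1.congr fun m => ?_
    have := ha.1 m
    rw [Real.norm_eq_abs, Real.norm_eq_abs, abs_abs, abs_abs, ← abs_div, ← abs_mul]
    congr 1
    field_simp
    ring

lemma tendsto_shift_ratio : Tendsto (fun m : ℕ => ((m : ℝ) + 2) / ((m : ℝ) + 1)) atTop (𝓝 1) := by
  have h : Tendsto (fun m : ℕ => 1 + 1 / ((m : ℝ) + 1)) atTop (𝓝 (1 + 0)) :=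
    tendsto_const_nhds.add tendsto_one_div_add_atTop_nhds_zero_nat
  rw [add_zero] at h
  refine h.congr fun m => ?_
  have : (m : ℝ) + 1 ≠ 0 := by positivity
  field_simp
  ring

lemma RatioOne.deriv {a : ℕ → ℝ} (ha : RatioOne a) : RatioOne (dcoef a) := by
  refine ⟨fun m => mul_ne_zero (by positivity) (ha.1 _), ?_⟩
  have h := tendsto_shift_ratio.mul (ha.2.comp (tendsto_add_atTop_nat 1))
  rw [one_mul] at h
  refine h.congr fun m => ?_
  have h1 := ha.1 (m + 1)
  have : (m : ℝ) + 1 ≠ 0 := by positivity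
  simp only [Function.comp, dcoef]
  push_cast
  field_simp
  ring

lemma RatioOne.hasSum {a : ℕ → ℝ} (ha : RatioOne a) {s : ℝ} (hs : |s| < 1) :
    HasSum (fun m => a m * s ^ m) (∑' m, a m * s ^ m) :=
  (ha.summable hs).of_abs.hasSum

lemma RatioOne.hasDerivAt {a : ℕ → ℝ} (ha : RatioOne a) {s : ℝ} (hs : |s| < 1) :
    HasDerivAt (fun x => ∑' m, a m * x ^ m) (∑' m, dcoef a m * s ^ m) s := by
  obtain ⟨ρ, h1, h2⟩ := exists_between hs
  have hρ : |ρ| < 1 := by rwa [abs_of_pos (lt_of_le_of_lt (abs_nonneg s) h1)]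
  have hρ0 : 0 < ρ := lt_of_le_of_lt (abs_nonneg s) h1
  have hsum : Summable (fun m : ℕ => |(m : ℝ) * a m * ρ ^ (m - 1)|) := by
    rw [← summable_nat_add_iff 1]
    refine (ha.deriv.summable hρ).congr fun m => ?_
    simp [dcoef]
  have key := hasDerivAt_tsum_of_isPreconnected (t := Metric.ball (0 : ℝ) ρ)
    (g := fun m x => a m * x ^ m) (g' := fun m x => (m : ℝ) * a m * x ^ (m - 1)) (y₀ := 0)
    (y := s) hsum Metric.isOpen_ball (convex_ball (0 : ℝ) ρ).isPreconnected
    (fun m x _ => by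
      have := (hasDerivAt_pow m x).const_mul (a m)
      exact this.congr_deriv (by ring))
    (fun m x hx => by
      have hx' : |x| ≤ ρ := by
        have : |x| < ρ := by simpa [Metric.mem_ball, dist_zero_right] using hx
        exact this.le
      rw [Real.norm_eq_abs, abs_mul, abs_mul _ (ρ ^ (m - 1)), abs_pow, abs_pow, abs_of_pos hρ0]
      gcongr)
    (by simpa using hρ0)
    (by simpa using (ha.summable (s := 0) (by simp)).of_abs)
    (by simpa [Metric.mem_ball, dist_zero_right] using h1)
  refine key.congr_deriv ?_
  have hs' : Summable (fun m : ℕ => (m : ℝ) * a m * s ^ (m - 1)) := by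
    rw [← summable_nat_add_iff 1]
    refine (ha.deriv.summable hs).of_abs.congr fun m => ?_
    simp [dcoef]
  rw [hs'.tsum_eq_zero_add]
  simp [dcoef]

/-- Multiplying the differentiated series by `s` restores the exponents (Euler operator). -/
lemma hasSum_mul_self {a : ℕ → ℝ} {s D : ℝ} (h : HasSum (fun m => dcoef a m * s ^ m) D) :
    HasSum (fun m : ℕ => (m : ℝ) * a m * s ^ m) (s * D) := by
  rw [← hasSum_nat_add_iff' 1]
  have := h.mul_left s
  rw [Finset.sum_range_one, Nat.cast_zero, zero_mul, zero_mul, sub_zero]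
  refine this.congr_fun fun m => ?_
  simp only [dcoef]
  push_cast
  ring

/-! ### The hypergeometric function and its differential equation -/

/-- The Taylor coefficients of `₂F₁(a, b; c; ·)`. -/
noncomputable def hcoef (a b c : ℝ) (m : ℕ) : ℝ :=
  ((ascPochhammer ℝ m).eval a * (ascPochhammer ℝ m).eval b)
    / ((ascPochhammer ℝ m).eval c * (m.factorial : ℝ))

lemma hcoef_succ {a b c : ℝ} (hc : 0 < c) (m : ℕ) :
    hcoef a b c (m + 1) * ((c + m) * (m + 1)) = (a + m) * (b + m) * hcoef a b c m := by
  have h1 : (ascPochhammer ℝ m).eval c ≠ 0 := (ascPochhammer_pos m c hc).ne'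
  have h2 : (m.factorial : ℝ) ≠ 0 := by positivity
  have h3 : c + (m : ℝ) ≠ 0 := by positivity
  have h4 : (m : ℝ) + 1 ≠ 0 := by positivity
  simp only [hcoef, ascPochhammer_succ_eval, Nat.factorial_succ]
  push_cast
  field_simp

lemma neg_half_add_ne (m : ℕ) : (-1 / 2 : ℝ) + m ≠ 0 := by
  intro h
  have h2 : (2 * m : ℝ) = 1 := by linarith
  have h3 : 2 * m = 1 := by exact_mod_cast h2
  omega

lemma hcoef_ne {a c : ℝ} (ha : 0 < a) (hc : 0 < c) (m : ℕ) : hcoef a (-1 / 2) c m ≠ 0 := by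
  induction m with
  | zero => simp [hcoef]
  | succ m ih =>
    have h := hcoef_succ (a := a) (b := -1 / 2) hc m
    have : (a + m) * (-1 / 2 + m) * hcoef a (-1 / 2) c m ≠ 0 :=
      mul_ne_zero (mul_ne_zero (by positivity) (neg_half_add_ne m)) ih
    rw [← h] at this
    exact left_ne_zero_of_mul this

lemma hcoef_nonpos {a c : ℝ} (ha : 0 < a) (hc : 0 < c) (m : ℕ) :
    hcoef a (-1 / 2) c (m + 1) ≤ 0 := by
  induction m with
  | zero =>
    have h := hcoef_succ (a := a) (b := -1 / 2) hc 0
    have h0 : hcoef a (-1 / 2) c 0 = 1 := by simp [hcoef]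
    rw [h0] at h
    simp only [Nat.cast_zero, add_zero, zero_add, mul_one] at h ⊢
    by_contra hcon
    have := mul_pos (not_le.mp hcon) hc
    linarith
  | succ m ih =>
    have h := hcoef_succ (a := a) (b := -1 / 2) hc (m + 1)
    by_contra hcon
    have h1 : 0 < (c + (m + 1 : ℕ)) * (((m + 1 : ℕ) : ℝ) + 1) := by positivity
    have h2 := mul_pos (not_le.mp hcon) h1
    have h3 : 0 ≤ (a + (m + 1 : ℕ)) * (-1 / 2 + ((m + 1 : ℕ) : ℝ)) := by
      refine mul_nonneg (by positivity) ?_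
      push_cast
      have : (0 : ℝ) ≤ m := by positivity
      linarith
    have h4 := mul_nonpos_of_nonneg_of_nonpos h3 ih
    linarith

lemma tendsto_add_ratio (x y : ℝ) :
    Tendsto (fun m : ℕ => (x + m) / (y + m)) atTop (𝓝 1) := by
  have h0 : Tendsto (fun m : ℕ => (m : ℝ)) atTop atTop := tendsto_natCast_atTop_atTop
  have h1 : Tendsto (fun m : ℕ => y + (m : ℝ)) atTop atTop := tendsto_atTop_add_const_left _ _ h0
  have h2 : Tendsto (fun m : ℕ => 1 + (x - y) / (y + m)) atTop (𝓝 (1 + 0)) :=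
    tendsto_const_nhds.add (h1.const_div_atTop _)
  rw [add_zero] at h2
  refine h2.congr' ?_
  filter_upwards [h1.eventually_gt_atTop 0] with m hm
  field_simp
  ring

lemma hcoef_ratioOne {a c : ℝ} (ha : 0 < a) (hc : 0 < c) : RatioOne (hcoef a (-1 / 2) c) := by
  refine ⟨hcoef_ne ha hc, ?_⟩
  have h := (tendsto_add_ratio a c).mul (tendsto_add_ratio (-1 / 2) 1)
  rw [one_mul] at h
  refine h.congr fun m => ?_
  have h1 := hcoef_succ (a := a) (b := -1 / 2) hc m
  have h2 := hcoef_ne ha hc m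
  have h3 : c + (m : ℝ) ≠ 0 := by positivity
  have h4 : 1 + (m : ℝ) ≠ 0 := by positivity
  rw [div_mul_div_comm, div_eq_div_iff (mul_ne_zero h3 h4) h2]
  linear_combination -h1

lemma hyp2F1_eq (a b c : ℝ) : hyp2F1 a b c = fun s => ∑' m, hcoef a b c m * s ^ m := rfl

/-- First and second derivatives of `₂F₁(a, -1/2; c; ·)` on `(-1, 1)`, the sign of the first one on
`[0, 1)`, and the Gauss differential equation. -/
lemma hyp_facts {a c : ℝ} (ha : 0 < a) (hc : 0 < c) :
    ∃ f1 f2 : ℝ → ℝ, ∀ s : ℝ, |s| < 1 →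
      HasDerivAt (hyp2F1 a (-1 / 2) c) (f1 s) s ∧ HasDerivAt f1 (f2 s) s ∧
      (0 ≤ s → f1 s ≤ 0) ∧
      s * (1 - s) * f2 s + (c - (a + 1 / 2) * s) * f1 s
        + a / 2 * hyp2F1 a (-1 / 2) c s = 0 := by
  have hr := hcoef_ratioOne ha hc
  refine ⟨fun s => ∑' m, dcoef (hcoef a (-1 / 2) c) m * s ^ m,
    fun s => ∑' m, dcoef (dcoef (hcoef a (-1 / 2) c)) m * s ^ m, fun s hs =>
    ⟨hr.hasDerivAt hs, hr.deriv.hasDerivAt hs, fun h0 => ?_, ?_⟩⟩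
  · refine tsum_nonpos fun m => mul_nonpos_of_nonpos_of_nonneg ?_ (pow_nonneg h0 m)
    exact mul_nonpos_of_nonneg_of_nonpos (by positivity) (hcoef_nonpos ha hc m)
  · rw [hyp2F1_eq]
    set A := hcoef a (-1 / 2) c with hA
    have e0 := hr.hasSum hs
    have e1 := hr.deriv.hasSum hs
    have e2 := hr.deriv.deriv.hasSum hs
    have e1' := hasSum_mul_self e1
    have e2' := hasSum_mul_self e2
    -- `s² F''` as a series in `s ^ m`, by applying the Euler operator to `s F'`
    have e2'' : HasSum (fun m : ℕ => (m : ℝ) * ((m : ℝ) - 1) * A m * s ^ m)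
        (s * (s * ∑' m, dcoef (dcoef A) m * s ^ m)) := by
      rw [← hasSum_nat_add_iff' 1]
      have := e2'.mul_left s
      rw [Finset.sum_range_one, Nat.cast_zero, zero_mul, zero_mul, zero_mul, sub_zero]
      refine this.congr_fun fun m => ?_
      simp only [dcoef]
      push_cast
      ring
    have tot := (((e2'.sub e2'').add (e1.mul_left c)).sub (e1'.mul_left (a + 1 / 2))).add
      (e0.mul_left (a / 2))
    have hz := tot.unique ((hasSum_zero).congr_fun fun m => ?_)
    · linear_combination hz
    · have h := hcoef_succ (a := a) (b := -1 / 2) hc m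
      rw [← hA] at h
      simp only [dcoef]
      linear_combination s ^ m * h

/-! ### The comparison function -/

/-- Coefficients of the comparison function `z^{1/2} (g₁ + g₂/z + g₃/z² + g₄/z³)`. The four linear
relations make the confluent limit operator send it to a positive multiple of
`z^{-7/2} (z - r² - 2r)²`; the remaining three facts are the sign of the function and of its
derivative at `z = r²`, and the positivity needed to absorb the correction due to finite `n`. -/
lemma exists_coeffs {r : ℝ} (hr : 2 ≤ r) : ∃ E g1 g2 g3 g4 : ℝ,
    (2 * (r ^ 2 + r) - 1) * g1 + 4 * g2 = 0 ∧
    -(2 * (r ^ 2 + r) - 3) * g2 + 8 * g3 = E ∧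
    -3 * (2 * (r ^ 2 + r) - 5) * g3 + 12 * g4 = -2 * (r ^ 2 + 2 * r) * E ∧
    -5 * (2 * (r ^ 2 + r) - 7) * g4 = (r ^ 2 + 2 * r) ^ 2 * E ∧
    g1 * (r ^ 2) ^ 3 + g2 * (r ^ 2) ^ 2 + g3 * r ^ 2 + g4 ≤ 0 ∧
    0 < g1 * (r ^ 2) ^ 3 - g2 * (r ^ 2) ^ 2 - 3 * g3 * r ^ 2 - 5 * g4 ∧
    ∀ z u : ℝ, 0 ≤ u → u ≤ 1 →
      0 ≤ E * (z - (r ^ 2 + 2 * r)) ^ 2 - u * (4 * g2 * z ^ 2 + 16 * g3 * z + 36 * g4) := by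
  obtain ⟨h, h0, rfl⟩ : ∃ h : ℝ, 0 ≤ h ∧ r = 2 + h := ⟨r - 2, by linarith, by ring⟩
  set p : ℝ := (2 + h) ^ 2 + 2 * (2 + h) with hp
  set q1 : ℝ := 2 * ((2 + h) ^ 2 + (2 + h)) - 1 with hq1
  set q3 : ℝ := 2 * ((2 + h) ^ 2 + (2 + h)) - 3 with hq3
  set q5 : ℝ := 2 * ((2 + h) ^ 2 + (2 + h)) - 5 with hq5
  set q7 : ℝ := 2 * ((2 + h) ^ 2 + (2 + h)) - 7 with hq7
  have q1pos : 0 < q1 := by rw [hq1]; nlinarith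
  have q3pos : 0 < q3 := by rw [hq3]; nlinarith
  have q5pos : 0 < q5 := by rw [hq5]; nlinarith
  have q7pos : 0 < q7 := by rw [hq7]; nlinarith
  -- solve the triangular system from the last relation upwards, clearing `q3 q5 q7`
  set E : ℝ := 15 * q3 * q5 * q7 with hE
  set g4 : ℝ := -3 * p ^ 2 * q3 * q5 with hg4
  set n3 : ℝ := 10 * p * q7 - 12 * p ^ 2 with hn3
  set g2 : ℝ := 8 * n3 - 15 * q5 * q7 with hg2
  have Epos : 0 < E := by positivity
  have hA : 0 < E - 4 * g2 := by
    have : E - 4 * g2 = 120*h^6 + 1800*h^5 + 10244*h^4 + 27568*h^3 + 37278*h^2 + 30314*h + 18601 := by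
      simp only [hE, hg2, hn3, hq3, hq5, hq7, hp]; ring
    rw [this]; positivity
  have hdisc : (p * E + 8 * (n3 * q3)) ^ 2 < (E - 4 * g2) * (p ^ 2 * E - 36 * g4) := by
    have : (E - 4 * g2) * (p ^ 2 * E - 36 * g4) - (p * E + 8 * (n3 * q3)) ^ 2 =
        13597079040 + 85291080960*h + 238710085088*h^2 + 397494014944*h^3 + 442000476120*h^4
        + 348480791792*h^5 + 201510782896*h^6 + 87050887680*h^7 + 28297359808*h^8
        + 6902970752*h^9 + 1246419840*h^10 + 161829376*h^11 + 14305664*h^12 + 771840*h^13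
        + 19200*h^14 := by
      simp only [hE, hg2, hg4, hn3, hq3, hq5, hq7, hp]; ring
    rw [← sub_pos, this]; positivity
  have hP : 4 * (-g2) * ((2 + h) ^ 2) ^ 3 + q1 * (g2 * ((2 + h) ^ 2) ^ 2
      + n3 * q3 * (2 + h) ^ 2 + g4) ≤ 0 := by
    have : 4 * (-g2) * ((2 + h) ^ 2) ^ 3 + q1 * (g2 * ((2 + h) ^ 2) ^ 2
      + n3 * q3 * (2 + h) ^ 2 + g4) = -(1264 + 53840*h + 141660*h^2 + 157080*h^3 + 92016*h^4
        + 29856*h^5 + 5072*h^6 + 352*h^7) := by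
      simp only [hg2, hg4, hn3, hq1, hq3, hq5, hq7, hp]; ring
    rw [this, neg_nonpos]; positivity
  have hR : 0 < 4 * (-g2) * ((2 + h) ^ 2) ^ 3 - q1 * (g2 * ((2 + h) ^ 2) ^ 2
      + 3 * (n3 * q3) * (2 + h) ^ 2 + 5 * g4) := by
    have : 4 * (-g2) * ((2 + h) ^ 2) ^ 3 - q1 * (g2 * ((2 + h) ^ 2) ^ 2
      + 3 * (n3 * q3) * (2 + h) ^ 2 + 5 * g4) = 2601072 + 10072112*h + 17073692*h^2
        + 16592816*h^3 + 10166352*h^4 + 4064160*h^5 + 1058064*h^6 + 172672*h^7 + 16000*h^8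
        + 640*h^9 := by
      simp only [hg2, hg4, hn3, hq1, hq3, hq5, hq7, hp]; ring
    rw [this]; positivity
  have hg1 : q1 * (-4 * g2 / q1) = -4 * g2 := by field_simp
  refine ⟨E, -4 * g2 / q1, g2, n3 * q3, g4, by rw [hg1]; ring, ?_, ?_, ?_, ?_, ?_, ?_⟩
  · simp only [hE, hg2]; ring
  · simp only [hE, hg4, hn3]; ring
  · simp only [hE, hg4]; ring
  · refine nonpos_of_mul_nonpos_right (a := q1) ?_ q1pos
    refine le_of_eq_of_le ?_ hP
    linear_combination ((2 + h) ^ 2) ^ 3 * hg1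
  · refine pos_of_mul_pos_right (a := q1) ?_ q1pos.le
    refine lt_of_lt_of_eq hR ?_
    linear_combination -((2 + h) ^ 2) ^ 3 * hg1
  · intro z u hu0 hu1
    have h1 : 0 ≤ E * (z - p) ^ 2 := by positivity
    -- the case `u = 1`: completing the square
    have h2 : 0 ≤ E * (z - p) ^ 2 - (4 * g2 * z ^ 2 + 16 * (n3 * q3) * z + 36 * g4) := by
      refine nonneg_of_mul_nonneg_right (a := E - 4 * g2) ?_ hA
      have := sq_nonneg ((E - 4 * g2) * z - (p * E + 8 * (n3 * q3)))
      nlinarith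
    have h3 := mul_nonneg hu0 h2
    have h4 := mul_nonneg (sub_nonneg.mpr hu1) h1
    linarith

/-! ### The weighted Wronskian -/

/-- The hypergeometric function cannot be nonnegative up to, and positive at, the point `σ` where
`n (1 - σ) / 2 = r²`. In the proof `P` is the polynomial with `G = const * (1 - s)^(-5/2) * P`, and
`V` is the Wronskian `F G' - F' G` freed of its powers of `1 - s`. -/
lemma not_pos {n r σ : ℝ} (hr : 2 ≤ r) (hc : 0 < n / 2 - (r ^ 2 + r))
    (hσ : n * (1 - σ) / 2 = r ^ 2) (hσ0 : 0 < σ) (hσ1 : σ < 1)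
    (hpos : 0 < hyp2F1 ((n - 1) / 2) (-1 / 2) (n / 2 - (r ^ 2 + r)) σ)
    (hnn : ∀ s, 0 ≤ s → s ≤ σ → 0 ≤ hyp2F1 ((n - 1) / 2) (-1 / 2) (n / 2 - (r ^ 2 + r)) s) :
    False := by
  obtain ⟨E, g1, g2, g3, g4, k1, k2, k3, k4, kP, kR, kE⟩ := exists_coeffs hr
  have ha : 0 < (n - 1) / 2 := by nlinarith
  obtain ⟨f1, f2, hf⟩ := hyp_facts ha hc
  set c : ℝ := n / 2 - (r ^ 2 + r) with hcdef
  set F := hyp2F1 ((n - 1) / 2) (-1 / 2) c with hF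
  set e : ℝ := r ^ 2 + r - 7 / 2 with he
  let P : ℝ → ℝ := fun s => g1 * (n * (1 - s) / 2) ^ 3 + g2 * (n * (1 - s) / 2) ^ 2
    + g3 * (n * (1 - s) / 2) + g4
  let R : ℝ → ℝ := fun s => -g1 / 2 * (n * (1 - s) / 2) ^ 3 + g2 / 2 * (n * (1 - s) / 2) ^ 2
    + 3 / 2 * g3 * (n * (1 - s) / 2) + 5 / 2 * g4
  let P' : ℝ → ℝ := fun s => -(n / 2) * (3 * g1 * (n * (1 - s) / 2) ^ 2
    + 2 * g2 * (n * (1 - s) / 2) + g3)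
  let R' : ℝ → ℝ := fun s => -(n / 2) * (-3 * g1 / 2 * (n * (1 - s) / 2) ^ 2
    + g2 * (n * (1 - s) / 2) + 3 / 2 * g3)
  let V : ℝ → ℝ := fun s => F s * R s - (1 - s) * P s * f1 s
  let V' : ℝ → ℝ := fun s => (f1 s * R s + F s * R' s)
    - ((-1 * P s + (1 - s) * P' s) * f1 s + (1 - s) * P s * f2 s)
  have hz : ∀ s : ℝ, HasDerivAt (fun s : ℝ => n * (1 - s) / 2) (-(n / 2)) s := fun s => by
    have := (((hasDerivAt_id s).const_sub 1).const_mul n).div_const 2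
    refine this.congr_deriv ?_
    ring
  have hPd : ∀ s, HasDerivAt P (P' s) s := fun s => by
    have := (((((hz s).pow 3).const_mul g1).add (((hz s).pow 2).const_mul g2)).add
      ((hz s).const_mul g3)).add_const g4
    refine this.congr_deriv ?_
    simp only [P']
    push_cast
    ring
  have hRd : ∀ s, HasDerivAt R (R' s) s := fun s => by
    have := (((((hz s).pow 3).const_mul (-g1 / 2)).add (((hz s).pow 2).const_mul (g2 / 2))).add
      ((hz s).const_mul (3 / 2 * g3))).add_const (5 / 2 * g4)
    refine this.congr_deriv ?_
    simp only [R']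
    push_cast
    ring
  have hVd : ∀ s, |s| < 1 → HasDerivAt V (V' s) s := fun s hs => by
    obtain ⟨d0, d1, -, -⟩ := hf s hs
    exact (d0.mul (hRd s)).sub ((((hasDerivAt_id s).const_sub 1).mul (hPd s)).mul d1)
  have habs : ∀ s, 0 ≤ s → s ≤ σ → |s| < 1 := fun s h0 h1 => by
    rw [abs_of_nonneg h0]; linarith
  have hWd : ∀ s, 0 < s → s ≤ σ → HasDerivAt (fun s => s ^ c * (1 - s) ^ e * V s)
      (s ^ (c - 1) * (1 - s) ^ (e - 1) *
        (c * (1 - s) * V s - e * s * V s + s * (1 - s) * V' s)) s := fun s h0 h1 => by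
    have hu : 0 < 1 - s := by linarith
    have a1 := Real.hasDerivAt_rpow_const (p := c) (Or.inl h0.ne')
    have a2 := ((hasDerivAt_id s).const_sub 1).rpow_const (p := e) (Or.inl hu.ne')
    refine ((a1.mul a2).mul (hVd s (habs s h0.le h1))).congr_deriv ?_
    have b1 : s ^ c = s ^ (c - 1) * s := by
      rw [Real.rpow_sub_one h0.ne']; field_simp
    have b2 : (1 - s) ^ e = (1 - s) ^ (e - 1) * (1 - s) := by
      rw [Real.rpow_sub_one hu.ne']; field_simp
    simp only [id, Pi.mul_apply, b1, b2]
    ring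
  -- the differential equation turns the bracket into `F` times a nonnegative function
  have hbr : ∀ s, 0 < s → s ≤ σ →
      0 ≤ c * (1 - s) * V s - e * s * V s + s * (1 - s) * V' s := fun s h0 h1 => by
    obtain ⟨-, -, -, ode⟩ := hf s (habs s h0.le h1)
    have key : c * (1 - s) * V s - e * s * V s + s * (1 - s) * V' s =
        F s / 4 * (E * (n * (1 - s) / 2 - (r ^ 2 + 2 * r)) ^ 2
          - (1 - s) * (4 * g2 * (n * (1 - s) / 2) ^ 2 + 16 * g3 * (n * (1 - s) / 2)
            + 36 * g4)) := by
      simp only [V, V', P, R, P', R', he, hcdef] at ode ⊢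
      linear_combination (-(1 - s) * (g1 * (n * (1 - s) / 2) ^ 3 + g2 * (n * (1 - s) / 2) ^ 2
        + g3 * (n * (1 - s) / 2) + g4)) * ode
        + F s / 4 * ((n * (1 - s) / 2) ^ 3 * k1 + (n * (1 - s) / 2) ^ 2 * k2
          + (n * (1 - s) / 2) * k3 + k4)
    rw [key]
    exact mul_nonneg (div_nonneg (hnn s h0.le h1) (by norm_num))
      (kE _ _ (by linarith) (by linarith))
  have hmono : MonotoneOn (fun s => s ^ c * (1 - s) ^ e * V s) (Icc 0 σ) := by
    refine monotoneOn_of_deriv_nonneg (convex_Icc 0 σ) ?_ ?_ ?_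
    · intro s hs
      have hu : 0 < 1 - s := by linarith [hs.2]
      refine ContinuousAt.continuousWithinAt ?_
      refine ((Real.continuousAt_rpow_const s c (Or.inr hc.le)).mul ?_).mul
        (hVd s (habs s hs.1 hs.2)).continuousAt
      exact (continuousAt_const.sub continuousAt_id).rpow_const (Or.inl hu.ne')
    · intro s hs
      rw [interior_Icc] at hs
      exact (hWd s hs.1 hs.2.le).differentiableAt.differentiableWithinAt
    · intro s hs
      rw [interior_Icc] at hs
      rw [(hWd s hs.1 hs.2.le).deriv]
      have hu : 0 ≤ 1 - s := by linarith [hs.2]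
      exact mul_nonneg (mul_nonneg (Real.rpow_nonneg hs.1.le _) (Real.rpow_nonneg hu _))
        (hbr s hs.1 hs.2.le)
  have hW := hmono (left_mem_Icc.mpr hσ0.le) (right_mem_Icc.mpr hσ0.le) hσ0.le
  simp only [Real.zero_rpow hc.ne', zero_mul] at hW
  have hu : 0 < 1 - σ := by linarith
  have hV : V σ < 0 := by
    have hf1 : f1 σ ≤ 0 := (hf σ (habs σ hσ0.le le_rfl)).2.2.1 hσ0.le
    have t1 : P σ ≤ 0 := by simp only [P, hσ]; exact kP
    have t2 : R σ < 0 := by simp only [R, hσ]; linarith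
    have t3 : 0 ≤ (1 - σ) * P σ * f1 σ :=
      mul_nonneg_of_nonpos_of_nonpos (mul_nonpos_of_nonneg_of_nonpos hu.le t1) hf1
    have t4 : F σ * R σ < 0 := mul_neg_of_pos_of_neg hpos t2
    simp only [V]
    linarith
  have hw : 0 < σ ^ c * (1 - σ) ^ e :=
    mul_pos (Real.rpow_pos_of_pos hσ0 _) (Real.rpow_pos_of_pos hu _)
  have := mul_neg_of_pos_of_neg hw hV
  linarith

/-- For integers `n, k` with `n/2 ≤ k ≤ n-12`, the unique zero
`s₀ ∈ (0,1)` of `s ↦ ₂F₁((n-1)/2, -1/2; k/2; s)` satisfies either `s₀ < k/n` or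
`(n·s₀ - k)² ≤ 2n·(1 - s₀)`. -/
theorem hypergeometric_zero_oscillation_bound
    (n k : ℕ) (hk1 : (n : ℝ) / 2 ≤ (k : ℝ)) (hk2 : k + 12 ≤ n)
    (s₀ : ℝ) (hs₀ : s₀ ∈ Set.Ioo (0 : ℝ) 1)
    (hzero : hyp2F1 (((n : ℝ) - 1) / 2) (-1 / 2) ((k : ℝ) / 2) s₀ = 0)
    (huniq : ∀ s ∈ Set.Ioo (0 : ℝ) 1,
      hyp2F1 (((n : ℝ) - 1) / 2) (-1 / 2) ((k : ℝ) / 2) s = 0 → s = s₀) :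
    s₀ < (k : ℝ) / (n : ℝ) ∨ ((n : ℝ) * s₀ - (k : ℝ)) ^ 2 ≤ 2 * (n : ℝ) * (1 - s₀) := by
  by_contra! hcon
  obtain ⟨hge, hgt⟩ := hcon
  have hd : (k : ℝ) + 12 ≤ n := by exact_mod_cast hk2
  have hk0 : (0 : ℝ) ≤ k := by positivity
  have hn : (0 : ℝ) < n := by linarith
  have hkpos : (0 : ℝ) < k := by linarith
  rw [div_le_iff₀ hn] at hge
  -- `r` is chosen so that `n - k = 2 (r² + r)`; the bound is attained where `n s - k = 2 r`
  obtain ⟨r, hr, hrd⟩ : ∃ r : ℝ, 2 ≤ r ∧ (n : ℝ) - k = 2 * (r ^ 2 + r) := by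
    have h5 : (5 : ℝ) ≤ √(1 + 2 * ((n : ℝ) - k)) := by
      apply Real.le_sqrt_of_sq_le; linarith
    have hsq : √(1 + 2 * ((n : ℝ) - k)) ^ 2 = 1 + 2 * ((n : ℝ) - k) :=
      Real.sq_sqrt (by linarith)
    refine ⟨(√(1 + 2 * ((n : ℝ) - k)) - 1) / 2, by linarith, ?_⟩
    linear_combination -hsq / 2
  have hc : (k : ℝ) / 2 = n / 2 - (r ^ 2 + r) := by linarith
  set σ : ℝ := 1 - 2 * r ^ 2 / n with hσdef
  have hσ : (n : ℝ) * (1 - σ) / 2 = r ^ 2 := by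
    rw [hσdef]; field_simp; ring
  have hσ1 : σ < 1 := by
    have : 0 < 2 * r ^ 2 / n := by positivity
    linarith
  have hσ0 : 0 < σ := by
    have : 2 * r ^ 2 / n < 1 := by rw [div_lt_one hn]; nlinarith
    linarith
  have hσs : σ < s₀ := by
    have h1 : (2 * r) ^ 2 + 2 * (2 * r) < (n * s₀ - k) ^ 2 + 2 * (n * s₀ - k) := by nlinarith
    have h2 : 2 * r < n * s₀ - k := by
      by_contra! h
      nlinarith
    have h3 : (n : ℝ) * σ < n * s₀ := by linarith
    exact lt_of_mul_lt_mul_left h3 hn.le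
  have ha : 0 < ((n : ℝ) - 1) / 2 := by linarith
  have hkc : 0 < (k : ℝ) / 2 := by linarith
  obtain ⟨f1, f2, hf⟩ := hyp_facts ha hkc
  have habs : ∀ s ∈ Icc 0 s₀, |s| < 1 := fun s hs => by
    rw [abs_of_nonneg hs.1]; linarith [hs.2, hs₀.2]
  have hanti : AntitoneOn (hyp2F1 (((n : ℝ) - 1) / 2) (-1 / 2) ((k : ℝ) / 2)) (Icc 0 s₀) := by
    refine antitoneOn_of_deriv_nonpos (convex_Icc 0 s₀) ?_ ?_ ?_
    · exact fun s hs => (hf s (habs s hs)).1.continuousAt.continuousWithinAt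
    · exact fun s hs =>
        (hf s (habs s (interior_subset hs))).1.differentiableAt.differentiableWithinAt
    · intro s hs
      have hs' := interior_subset hs
      rw [(hf s (habs s hs')).1.deriv]
      exact (hf s (habs s hs')).2.2.1 hs'.1
  have hnn : ∀ s, 0 ≤ s → s ≤ σ →
      0 ≤ hyp2F1 (((n : ℝ) - 1) / 2) (-1 / 2) ((k : ℝ) / 2) s := fun s h0 h1 => by
    have := hanti ⟨h0, by linarith⟩ (right_mem_Icc.mpr hs₀.1.le) (by linarith)
    rwa [hzero] at this
  have hpos : 0 < hyp2F1 (((n : ℝ) - 1) / 2) (-1 / 2) ((k : ℝ) / 2) σ := by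
    refine lt_of_le_of_ne (hnn σ hσ0.le le_rfl) fun h => ?_
    exact hσs.ne (huniq σ ⟨hσ0, hσ1⟩ h.symm)
  rw [hc] at hpos hnn hkc
  exact not_pos hr hkc hσ hσ0 hσ1 hpos hnn
end

section
/- Let n ≥ 7 be an integer and let k be an integer with 3 ≤ k ≤ (n - √(8(n-4)))/2. Let t_{n,k} ∈ (0,1) be the unique zero of f_{n,k} and set g̃(t) := ₂F₁(1, (n-4)/2; k/2; t²). Then g̃'(t_{n,k})/g̃(t_{n,k}) > ((n-2)·t_{n,k} - (k-1)·t_{n,k}⁻¹)/(1 - t_{n,k}²); that is, 4-n ∈ A_{n,k}. -/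
/-- `f_{n,k}(t) := ₂F₁((n-1)/2, -1/2; k/2; t²)`. -/
noncomputable def fnk (n k : ℕ) (t : ℝ) : ℝ :=
  hyp2F1 (((n : ℝ) - 1) / 2) (-1 / 2) ((k : ℝ) / 2) (t ^ 2)

/-- `g̃_{n,k}(t) := g_{n,k,4-n}(t) = ₂F₁(1, (n-4)/2; k/2; t²)`. -/
noncomputable def gtil (n k : ℕ) (t : ℝ) : ℝ :=
  hyp2F1 1 (((n : ℝ) - 4) / 2) ((k : ℝ) / 2) (t ^ 2)

/-! ### Hypergeometric coefficients and summability -/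

/-- The coefficient of `s ^ m` in the power series of `₂F₁(a,b;c;s)`. -/
noncomputable def hypCoeff (a b c : ℝ) (m : ℕ) : ℝ :=
  ((ascPochhammer ℝ m).eval a * (ascPochhammer ℝ m).eval b)
    / ((ascPochhammer ℝ m).eval c * (m.factorial : ℝ))

lemma hypCoeff_zero (a b c : ℝ) : hypCoeff a b c 0 = 1 := by
  simp [hypCoeff]

lemma hypCoeff_succ (a b c : ℝ) (m : ℕ) :
    hypCoeff a b c (m + 1) = (a + m) * (b + m) / ((c + m) * (1 + m)) * hypCoeff a b c m := by
  unfold hypCoeff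
  rw [ascPochhammer_succ_eval, ascPochhammer_succ_eval, ascPochhammer_succ_eval,
    Nat.factorial_succ, div_mul_div_comm]
  push_cast
  congr 1 <;> ring

lemma hypCoeff_ne_zero {a b c : ℝ} (hc : 0 < c) (ha : ∀ m : ℕ, a + m ≠ 0)
    (hb : ∀ m : ℕ, b + m ≠ 0) (m : ℕ) : hypCoeff a b c m ≠ 0 := by
  induction m with
  | zero => simp [hypCoeff_zero]
  | succ m ih =>
    rw [hypCoeff_succ]
    have h1 : (c + m) ≠ 0 := by positivity
    have h2 : (1 + (m : ℝ)) ≠ 0 := by positivity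
    exact mul_ne_zero (div_ne_zero (mul_ne_zero (ha m) (hb m)) (mul_ne_zero h1 h2)) ih

/-- A sequence with hypergeometric term ratio tending to `1` has radius of convergence at
least `1`, also after polynomial weights are inserted. -/
lemma summable_pow_mul_hyp {h : ℕ → ℝ} {a b c d x : ℝ} (hh : ∀ m, h m ≠ 0)
    (hrec : ∀ m : ℕ, h (m + 1) = (a + m) * (b + m) / ((c + m) * (d + m)) * h m)
    (hx0 : 0 < x) (hx1 : x < 1) (j : ℕ) :
    Summable (fun m : ℕ => (m : ℝ) ^ j * h m * x ^ m) := by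
  have hT : Filter.Tendsto (fun m : ℕ => |((1 + 1 * (m : ℝ)) / (0 + 1 * (m : ℝ))) ^ j *
      (((a + 1 * (m : ℝ)) / (c + 1 * (m : ℝ))) * ((b + 1 * (m : ℝ)) / (d + 1 * (m : ℝ)))) * x|)
      Filter.atTop (nhds x) := by
    have t1 := tendsto_add_mul_div_add_mul_atTop_nhds (𝕜 := ℝ) 1 0 1 one_ne_zero
    have t2 := tendsto_add_mul_div_add_mul_atTop_nhds (𝕜 := ℝ) a c 1 one_ne_zero
    have t3 := tendsto_add_mul_div_add_mul_atTop_nhds (𝕜 := ℝ) b d 1 one_ne_zero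
    have := (((t1.pow j).mul (t2.mul t3)).mul_const x).abs
    simpa [abs_of_pos hx0] using this
  refine summable_of_ratio_test_tendsto_lt_one hx1 ?_ (hT.congr' ?_)
  · filter_upwards [Filter.eventually_ge_atTop 1] with m hm
    have : (m : ℝ) ≠ 0 := by positivity
    exact mul_ne_zero (mul_ne_zero (pow_ne_zero _ this) (hh m)) (pow_ne_zero _ hx0.ne')
  · filter_upwards [Filter.eventually_ge_atTop 1] with m hm
    have h0 : (m : ℝ) ≠ 0 := by positivity
    have h1 := hh m
    have h2 : x ^ m ≠ 0 := pow_ne_zero _ hx0.ne'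
    have h3 : (m : ℝ) ^ j ≠ 0 := pow_ne_zero _ h0
    rw [← norm_div, Real.norm_eq_abs, hrec m, pow_succ x]
    congr 1
    push_cast
    rw [div_mul_div_comm, eq_div_iff (mul_ne_zero (mul_ne_zero h3 h1) h2), div_pow]
    simp only [one_mul, zero_add]
    field_simp
    ring

lemma hasSum_of_eq {f g : ℕ → ℝ} {v : ℝ} (h : ∀ m, f m = g m) (hg : HasSum g v) : HasSum f v :=
  funext h ▸ hg

/-! ### Log-convexity of power series -/

/-- Log-convexity of a power series `∑ u_m x^m` with positive coefficients for which
`m! u_m` is log-convex: with `U_i = ∑ m^i u_m x^m` this is Cauchy-Schwarz for the weights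
`u_m x^m`. -/
lemma moment_sq_le {u r : ℕ → ℝ} {x U0 U1 U2 : ℝ} (hu : ∀ m, 0 < u m) (hx : 0 < x)
    (hrec : ∀ m : ℕ, ((m : ℝ) + 1) * u (m + 1) = r m * u m)
    (hr0 : ∀ m, 0 ≤ r m) (hr : ∀ m, r m ≤ r (m + 1)) (hU0 : 0 < U0)
    (h0 : HasSum (fun m => u m * x ^ m) U0)
    (h1 : HasSum (fun m : ℕ => (m : ℝ) * u m * x ^ m) U1)
    (h2 : HasSum (fun m : ℕ => (m : ℝ) ^ 2 * u m * x ^ m) U2) :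
    U1 ^ 2 ≤ U0 * (U2 - U1) := by
  have key : ∀ l : ℝ, 0 ≤ (U2 - U1) - 2 * l * U1 + l ^ 2 * U0 := by
    intro l
    have s1 : HasSum (fun m : ℕ => ((m + 1 : ℕ) : ℝ) * u (m + 1) * x ^ (m + 1)) U1 := by
      simpa using (hasSum_nat_add_iff' 1).2 h1
    have s2 : HasSum (fun m : ℕ => ((m + 2 : ℕ) : ℝ) ^ 2 * u (m + 2) * x ^ (m + 2)
        - ((m + 2 : ℕ) : ℝ) * u (m + 2) * x ^ (m + 2)) (U2 - U1) := by
      have := (hasSum_nat_add_iff' 2).2 (h2.sub h1)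
      simpa [Finset.sum_range_succ] using this
    have := (s2.sub (s1.mul_left (2 * l))).add (h0.mul_left (l ^ 2))
    refine this.nonneg fun m => ?_
    have e1 := hrec m
    have e2 := hrec (m + 1)
    push_cast at e1 e2 ⊢
    have : ((m : ℝ) + 2) ^ 2 * u (m + 2) * x ^ (m + 2) - ((m : ℝ) + 2) * u (m + 2) * x ^ (m + 2)
        - 2 * l * (((m : ℝ) + 1) * u (m + 1) * x ^ (m + 1)) + l ^ 2 * (u m * x ^ m)
        = (u m * x ^ m) * ((r m * x - l) ^ 2 + r m * (r (m + 1) - r m) * x ^ 2) := by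
      have e3 : ((m : ℝ) + 1) * (((m : ℝ) + 2) * u (m + 2)) = r (m + 1) * (r m * u m) := by
        rw [← e1]
        linear_combination ((m : ℝ) + 1) * e2
      rw [pow_add, pow_add]
      linear_combination x ^ m * x ^ 2 * e3 - 2 * l * x ^ m * x * e1
    rw [this]
    have p := hr m
    have q := hr0 m
    have := (hu m).le
    have h5 : 0 ≤ r (m + 1) - r m := by linarith
    positivity
  have h := key (U1 / U0)
  have e : (U2 - U1) - 2 * (U1 / U0) * U1 + (U1 / U0) ^ 2 * U0
      = (U0 * (U2 - U1) - U1 ^ 2) / U0 := by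
    field_simp
    ring
  rw [e] at h
  have := (le_div_iff₀ hU0).1 h
  linarith

/-! ### The zero of `f` -/

/-- If the tangent of `f` at `x = K/N` vanished beyond `1/2`, so that `-f(x)/f'(x) > 1/2 - x`, then
`(1/2 - K/N)² < (N+1)/(N-1)²`, against the assumption `8 (N-4) ≤ (N-2K)²`. Here `T0 = f(x)` and
`U0 = -f'(x)`, while `U1 = -x f''(x)`. -/
lemma half_gap_false {N K a x U0 U1 T0 : ℝ} (hN : 13 ≤ N)
    (hd : 8 * (N - 4) ≤ (N - 2 * K) ^ 2) (hxN : x * N = K) (ha : a = (N - 1) / 2)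
    (hx0 : 0 < x) (hx2 : x ≤ 1 / 2) (hU0pos : 0 < U0) (hT : U0 * (1 / 2 - x) < T0)
    (hT0' : a / 2 * T0 = (1 - x) * U1)
    (hq : (1 - x) * U1 ^ 2 ≤ x * ((a + 1) / 2) * U0 ^ 2) : False := by
  have hN0 : 0 < N := by linarith
  have ha0 : 0 < a := by linarith
  have hδ : 0 ≤ 1 / 2 - x := by linarith
  have hlt : a / 2 * (1 / 2 - x) * U0 < (1 - x) * U1 := by
    have := mul_lt_mul_of_pos_left hT (by positivity : 0 < a / 2)
    linarith
  have hsq : (a / 2 * (1 / 2 - x) * U0) ^ 2 < ((1 - x) * U1) ^ 2 :=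
    pow_lt_pow_left₀ hlt (by positivity) two_ne_zero
  have hub : ((1 - x) * U1) ^ 2 ≤ (a + 1) / 8 * U0 ^ 2 := by
    have h1 := mul_le_mul_of_nonneg_left hq (by linarith : 0 ≤ 1 - x)
    have h2 : (1 - x) * x ≤ 1 / 4 := by nlinarith [sq_nonneg (1 - 2 * x)]
    have h3 := mul_le_mul_of_nonneg_right h2 (by positivity : 0 ≤ (a + 1) / 2 * U0 ^ 2)
    linarith
  have hfin : (a / 2 * (1 / 2 - x)) ^ 2 < (a + 1) / 8 := by
    have : (a / 2 * (1 / 2 - x)) ^ 2 * U0 ^ 2 < (a + 1) / 8 * U0 ^ 2 := by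
      rw [← mul_pow]; linarith
    exact lt_of_mul_lt_mul_right this (by positivity)
  have hδN : (1 / 2 - x) * N = (N - 2 * K) / 2 := by rw [← hxN]; ring
  have e1 : (a / 2 * (1 / 2 - x)) ^ 2 * N ^ 2 = (N - 1) ^ 2 / 64 * (N - 2 * K) ^ 2 := by
    rw [← mul_pow, show a / 2 * (1 / 2 - x) * N = a / 2 * ((1 / 2 - x) * N) by ring, hδN, ha]
    ring
  have e2 : (a / 2 * (1 / 2 - x)) ^ 2 * N ^ 2 < (N + 1) / 16 * N ^ 2 := by
    have := mul_lt_mul_of_pos_right hfin (by positivity : 0 < N ^ 2)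
    have h2 : (a + 1) / 8 = (N + 1) / 16 := by rw [ha]; ring
    rwa [h2] at this
  have e3 := mul_le_mul_of_nonneg_left hd (by positivity : 0 ≤ (N - 1) ^ 2 / 64)
  have e4 : 0 ≤ N ^ 2 * (N - 13) := mul_nonneg (sq_nonneg N) (by linarith)
  have e5 : (N - 1) ^ 2 / 64 * (8 * (N - 4)) < (N + 1) / 16 * N ^ 2 := by linarith
  linarith only [e4, e5, hN]

/-- The zero of `f = ₂F₁((N-1)/2, -1/2; K/2; ·)` lies in `(0, 1/2]`. The concave function `f` is
bounded by its tangent at `x = K/N`. There the first-order term of the hypergeometric equation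
drops out, so `f(x)` is a multiple of `-f''(x)`, which log-convexity of `-f'` bounds by
a multiple of `-f'(x)`. -/
lemma zero_le_half {N K s : ℝ} (hK : 3 ≤ K) (hN : 13 ≤ N) (hKN : 2 * K ≤ N)
    (hd : 8 * (N - 4) ≤ (N - 2 * K) ^ 2) (hs0 : 0 < s) (hs1 : s < 1)
    (hz : ∑' m : ℕ, hypCoeff ((N - 1) / 2) (-1 / 2) (K / 2) m * s ^ m = 0) : s ≤ 1 / 2 := by
  by_contra! hs
  set a := (N - 1) / 2 with ha
  set c := K / 2 with hc
  set e := hypCoeff a (-1 / 2) c with he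
  have ha0 : 0 < a := by rw [ha]; linarith
  have hc0 : 0 < c := by rw [hc]; linarith
  have hac : c ≤ a + 1 := by rw [ha, hc]; linarith
  set x := K / N with hx
  have hN0 : 0 < N := by linarith
  have hxN : x * N = K := by rw [hx]; field_simp
  have hx0 : 0 < x := by rw [hx]; positivity
  have hx2 : x ≤ 1 / 2 := by rw [hx, div_le_iff₀ hN0]; linarith
  have hx1 : x < 1 := by linarith
  clear_value a c x
  -- `u_m` are the Taylor coefficients of `-f'`.
  let u : ℕ → ℝ := fun m => -(((m : ℝ) + 1) * e (m + 1))
  have erec : ∀ m : ℕ, e (m + 1) = (a + m) * (-1 / 2 + m) / ((c + m) * (1 + m)) * e m :=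
    fun m => hypCoeff_succ _ _ _ m
  have urec : ∀ m : ℕ,
      u (m + 1) = (a + 1 + m) * (1 / 2 + m) / ((c + 1 + m) * (1 + m)) * u m := by
    intro m
    simp only [u]
    rw [erec (m + 1)]
    have h1 : c + 1 + (m : ℝ) ≠ 0 := by positivity
    have h1' : c + ((m : ℝ) + 1) ≠ 0 := by positivity
    have h2 : 1 + (m : ℝ) ≠ 0 := by positivity
    have h3 : 1 + ((m : ℝ) + 1) ≠ 0 := by positivity
    push_cast
    field_simp
    ring
  have hu : ∀ m, 0 < u m := by
    intro m
    induction m with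
    | zero =>
      have h0 : e 0 = 1 := hypCoeff_zero _ _ _
      simp only [u]
      rw [erec 0, h0]
      have : -((((0 : ℕ) : ℝ) + 1) * ((a + (0 : ℕ)) * (-1 / 2 + (0 : ℕ)) /
          ((c + (0 : ℕ)) * (1 + (0 : ℕ))) * 1)) = a / (2 * c) := by
        push_cast
        field_simp
        ring
      rw [this]
      positivity
    | succ m ih => rw [urec]; positivity
  have hene : ∀ m, e m ≠ 0 := by
    refine hypCoeff_ne_zero hc0 (fun m => by positivity) fun m h => ?_
    have h2 : ((2 * m : ℕ) : ℝ) = ((1 : ℕ) : ℝ) := by push_cast; linarith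
    have := Nat.cast_injective h2
    omega
  have hsum_e : ∀ y, 0 < y → y < 1 → ∀ j, Summable (fun m : ℕ => (m : ℝ) ^ j * e m * y ^ m) :=
    fun y h0 h1 j => summable_pow_mul_hyp hene erec h0 h1 j
  have hsum_u : ∀ j, Summable (fun m : ℕ => (m : ℝ) ^ j * u m * x ^ m) :=
    fun j => summable_pow_mul_hyp (fun m => (hu m).ne') urec hx0 hx1 j
  obtain ⟨U0, hU0⟩ := hsum_u 0
  obtain ⟨U1, hU1⟩ := hsum_u 1
  obtain ⟨U2, hU2⟩ := hsum_u 2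
  obtain ⟨T0, hT0⟩ := hsum_e x hx0 hx1 0
  simp only [pow_zero, one_mul, pow_one] at hU0 hU1 hT0
  have hfs : HasSum (fun m : ℕ => e m * s ^ m) 0 := by
    have := hsum_e s hs0 hs1 0
    simp only [pow_zero, one_mul] at this
    rw [← hz]
    exact this.hasSum
  have hU0pos : 0 < U0 := by
    have := hU0.summable.tsum_pos (fun m => by have := hu m; positivity) 0
      (by have := hu 0; positivity)
    rwa [hU0.tsum_eq] at this
  have hU1nn : 0 ≤ U1 := hU1.nonneg fun m => by have := hu m; positivity
  -- The moments of `e` expressed through those of `u`.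
  have hT1 : HasSum (fun m : ℕ => (m : ℝ) * e m * x ^ m) (-(x * U0)) := by
    rw [← hasSum_nat_add_iff' 1]
    have := (hU0.mul_left x).neg
    convert this using 1
    · funext m; simp only [u]; push_cast; ring
    · simp
  have hT2 : HasSum (fun m : ℕ => (m : ℝ) ^ 2 * e m * x ^ m) (-(x * (U1 + U0))) := by
    rw [← hasSum_nat_add_iff' 1]
    have := ((hU1.add hU0).mul_left x).neg
    convert this using 1
    · funext m; simp only [u]; push_cast; ring
    · simp
  -- The hypergeometric equation for `f` at `x`.
  have ode1 : a / 2 * T0 = U1 + c * U0 - x * (U1 + (a + 1 / 2) * U0) := by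
    have l1 := hU1.add (hU0.mul_left c)
    have l2 := (hT2.add ((hT1.mul_left (a - 1 / 2)))).sub (hT0.mul_left (a / 2))
    have l3 : HasSum (fun m : ℕ => (m : ℝ) * u m * x ^ m + c * (u m * x ^ m))
        (-(-(x * (U1 + U0)) + (a - 1 / 2) * (-(x * U0)) - a / 2 * T0)) := by
      refine hasSum_of_eq (fun m => ?_) l2.neg
      simp only [u]
      rw [erec m]
      have h1 : c + (m : ℝ) ≠ 0 := by positivity
      have h2 : 1 + (m : ℝ) ≠ 0 := by positivity
      field_simp
      ring
    have := l1.unique l3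
    linarith
  -- The hypergeometric equation for `f'` at `x`.
  have ode2 : U2 + c * U1 = x * (U2 + (a + 3 / 2) * U1 + (a + 1) / 2 * U0) := by
    have l1 := (hasSum_nat_add_iff' 1).2 (hU2.add (hU1.mul_left c))
    have l2 := ((hU2.add (hU1.mul_left (a + 3 / 2))).add (hU0.mul_left ((a + 1) / 2))).mul_left x
    have l3 := l1.unique (by
      refine hasSum_of_eq (fun m => ?_) l2
      rw [urec m]
      have h1 : c + 1 + (m : ℝ) ≠ 0 := by positivity
      have h2 : 1 + (m : ℝ) ≠ 0 := by positivity
      push_cast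
      field_simp
      ring)
    simpa using l3
  have logc : U1 ^ 2 ≤ U0 * (U2 - U1) := by
    refine moment_sq_le (r := fun m => (a + 1 + m) * (1 / 2 + m) / (c + 1 + m)) hu hx0 ?_ ?_ ?_
      hU0pos hU0 hU1 hU2
    · intro m
      rw [urec m]
      have h1 : c + 1 + (m : ℝ) ≠ 0 := by positivity
      have h2 : 1 + (m : ℝ) ≠ 0 := by positivity
      field_simp
      ring
    · intro m; positivity
    · intro m
      have h1 : 0 < c + 1 + (m : ℝ) := by positivity
      have h2 : 0 < c + 1 + ((m + 1 : ℕ) : ℝ) := by positivity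
      rw [div_le_div_iff₀ h1 h2]
      push_cast
      have hm : (0 : ℝ) ≤ m := by positivity
      have h3 : 0 ≤ a + 1 - c := by linarith
      have : 0 ≤ (a + 1 - c) * c := by positivity
      have : 0 ≤ (a + 1 - c) * m := by positivity
      nlinarith [mul_nonneg hm hm, mul_nonneg hm hc0.le, sq_nonneg c]
  -- `f s` lies below the tangent of `f` at `x`, term by term by Bernoulli's inequality.
  have tang : U0 * (s - x) ≤ T0 := by
    have l := (hT0.add (hT1.mul_left ((s - x) / x))).sub hfs
    have := l.nonneg fun m => ?_
    · have e1 : T0 + (s - x) / x * -(x * U0) - 0 = T0 - U0 * (s - x) := by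
        field_simp
        ring
      rw [e1] at this
      linarith
    · rcases m with _ | m
      · simp
      · have hb := one_add_mul_le_pow (a := s / x - 1)
          (by have : 0 < s / x := by positivity
              linarith) (m + 1)
        have hxm : 0 < x ^ (m + 1) := by positivity
        have hb2 := mul_le_mul_of_nonneg_right hb hxm.le
        have e2 : (1 + (s / x - 1)) ^ (m + 1) * x ^ (m + 1) = s ^ (m + 1) := by
          rw [← mul_pow]; congr 1; field_simp; ring
        rw [e2] at hb2
        have hneg : e (m + 1) < 0 := by
          have h1 := hu m
          simp only [u] at h1
          by_contra! h
          have : 0 ≤ ((m : ℝ) + 1) * e (m + 1) := by positivity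
          linarith
        have e3 : (s - x) / x = s / x - 1 := by field_simp
        rw [e3]
        nlinarith [mul_nonneg (neg_nonneg.2 hneg.le) (sub_nonneg.2 hb2)]
  -- At `x = K / N` the coefficient of `U0` in `ode1` vanishes.
  have hcx : x * (a + 1 / 2) = c := by rw [ha, hc, ← hxN]; ring
  have hT0' : a / 2 * T0 = (1 - x) * U1 := by linear_combination ode1 - U0 * hcx
  have hq : (1 - x) * U1 ^ 2 ≤ x * ((a + 1) / 2) * U0 ^ 2 := by
    have h1 : (1 - x) * (U2 - U1) = (2 * x - 1) * U1 + x * ((a + 1) / 2) * U0 := by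
      linear_combination ode2 + U1 * hcx
    have h2 := mul_le_mul_of_nonneg_left logc (by linarith : 0 ≤ 1 - x)
    have h3 : (1 - x) * (U0 * (U2 - U1))
        = U0 * ((2 * x - 1) * U1 + x * ((a + 1) / 2) * U0) := by rw [← h1]; ring
    have h4 : 0 ≤ (1 - 2 * x) * (U0 * U1) := by
      have : 0 ≤ 1 - 2 * x := by linarith
      positivity
    nlinarith
  have hlt : U0 * (1 / 2 - x) < T0 :=
    (mul_lt_mul_of_pos_left (by linarith) hU0pos).trans_le tang
  exact half_gap_false hN hd hxN ha hx0 hx2 hU0pos hlt hT0' hq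

/-! ### The function `₂F₁(1,b;c;·)` -/

/-- `₂F₁(1,b;c;·)` is positive and satisfies a first-order linear differential equation, obtained
by summing the two-term recursion of its coefficients. -/
lemma hyp_one_ode {b c s : ℝ} (hb : 0 < b) (hc : 0 < c) (hs0 : 0 < s) (hs1 : s < 1) :
    ∃ G G' : ℝ, 0 < G ∧ hyp2F1 1 b c s = G ∧ HasDerivAt (hyp2F1 1 b c) G' s ∧
      (1 - s) * (s * G') = (c - 1) + (b * s - (c - 1)) * G := by
  set h := hypCoeff 1 b c with hh
  have hrec : ∀ m : ℕ, h (m + 1) = (1 + m) * (b + m) / ((c + m) * (1 + m)) * h m :=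
    fun m => hypCoeff_succ _ _ _ m
  have hzero : h 0 = 1 := hypCoeff_zero _ _ _
  have hne : ∀ m, h m ≠ 0 :=
    hypCoeff_ne_zero hc (fun m => by positivity) (fun m => by positivity)
  have hpos : ∀ m, 0 < h m := by
    intro m
    induction m with
    | zero => rw [hzero]; exact one_pos
    | succ m ih => rw [hrec]; positivity
  have hsum : ∀ y, 0 < y → y < 1 → ∀ j, Summable (fun m : ℕ => (m : ℝ) ^ j * h m * y ^ m) :=
    fun y h0 h1 j => summable_pow_mul_hyp hne hrec h0 h1 j
  obtain ⟨G, hG⟩ := hsum s hs0 hs1 0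
  obtain ⟨H, hH⟩ := hsum s hs0 hs1 1
  simp only [pow_zero, one_mul, pow_one] at hG hH
  have hGpos : 0 < G := by
    have := hG.summable.tsum_pos (fun m => by have := hpos m; positivity) 0
      (by have := hpos 0; positivity)
    rwa [hG.tsum_eq] at this
  have hfun : hyp2F1 1 b c = fun z => ∑' m : ℕ, h m * z ^ m := rfl
  refine ⟨G, s⁻¹ * H, hGpos, ?_, ?_, ?_⟩
  · rw [hfun]; exact hG.tsum_eq
  · obtain ⟨r, hr1, hr2⟩ := exists_between hs1
    have hr0 : 0 < r := hs0.trans hr1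
    have hbd : Summable (fun m : ℕ => r⁻¹ * ((m : ℝ) ^ 1 * h m * r ^ m)) :=
      (hsum r hr0 hr2 1).mul_left _
    have hD := hasDerivAt_tsum_of_isPreconnected (𝕜 := ℝ) (t := Set.Ioo 0 r)
      (g := fun (m : ℕ) z => h m * z ^ m) (g' := fun (m : ℕ) z => h m * ((m : ℝ) * z ^ (m - 1)))
      (y₀ := s) (y := s) hbd isOpen_Ioo isPreconnected_Ioo
      (fun m z _ => (hasDerivAt_pow m z).const_mul (h m)) ?_ ⟨hs0, hr1⟩ hG.summable ⟨hs0, hr1⟩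
    · rw [hfun]
      have : ∑' m : ℕ, h m * ((m : ℝ) * s ^ (m - 1)) = s⁻¹ * H := by
        rw [← (hH.mul_left s⁻¹).tsum_eq]
        congr 1
        funext m
        rcases m with _ | m
        · simp
        · rw [Nat.add_sub_cancel, pow_succ]
          field_simp
      rwa [this] at hD
    · intro m z hz
      have hz0 : 0 < z := hz.1
      have := hpos m
      rw [Real.norm_of_nonneg (by positivity)]
      rcases m with _ | m
      · simp
      · rw [Nat.add_sub_cancel]
        have h1 : z ^ m ≤ r ^ m := pow_le_pow_left₀ hz0.le hz.2.le m
        have e : r⁻¹ * (((m + 1 : ℕ) : ℝ) ^ 1 * h (m + 1) * r ^ (m + 1))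
            = h (m + 1) * (((m + 1 : ℕ) : ℝ) * r ^ m) := by
          rw [pow_succ r]; field_simp
        rw [e]
        gcongr
  · have l1 := (hasSum_nat_add_iff' 1).2 (hH.add (hG.mul_left (c - 1)))
    have l2 := ((hG.mul_left b).add hH).mul_left s
    have l3 := l1.unique (by
      refine hasSum_of_eq (fun m => ?_) l2
      rw [hrec m]
      have h1 : c + (m : ℝ) ≠ 0 := by positivity
      have h2 : 1 + (m : ℝ) ≠ 0 := by positivity
      push_cast
      field_simp
      ring)
    simp only [Finset.range_one, Finset.sum_singleton, CharP.cast_eq_zero, pow_zero,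
      mul_one, zero_add, hzero] at l3
    rw [mul_inv_cancel_left₀ hs0.ne']
    linear_combination l3

/-! ### Admissibility of `4-n` -/

/-- For `n ≥ 7` and `3 ≤ k ≤ (n - √(8(n-4)))/2`, the exponent `4-n`
is admissible: with `t₀` the unique zero of `f_{n,k}` in `(0,1)` and
`g̃(t) = ₂F₁(1,(n-4)/2;k/2;t²)`, one has
`g̃'(t₀)/g̃(t₀) > ((n-2)t₀ - (k-1)t₀⁻¹)/(1-t₀²)`. -/
theorem four_sub_n_admissible_small_k
    (n k : ℕ) (hn : 7 ≤ n) (hk1 : 3 ≤ k)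
    (hk2 : (k : ℝ) ≤ ((n : ℝ) - Real.sqrt (8 * ((n : ℝ) - 4))) / 2)
    (t₀ : ℝ) (ht₀ : t₀ ∈ Set.Ioo (0 : ℝ) 1) (hzero : fnk n k t₀ = 0)
    (huniq : ∀ t ∈ Set.Ioo (0 : ℝ) 1, fnk n k t = 0 → t = t₀) :
    deriv (gtil n k) t₀ / gtil n k t₀
      > (((n : ℝ) - 2) * t₀ - ((k : ℝ) - 1) * t₀⁻¹) / (1 - t₀ ^ 2) := by
  have hn' : (7 : ℝ) ≤ n := by exact_mod_cast hn
  have hk' : (3 : ℝ) ≤ k := by exact_mod_cast hk1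
  obtain ⟨ht0, ht1⟩ := ht₀
  have hsq : Real.sqrt (8 * ((n : ℝ) - 4)) ≤ n - 2 * k := by linarith
  have hnn : (0 : ℝ) ≤ n - 2 * k := (Real.sqrt_nonneg _).trans hsq
  have hd : 8 * ((n : ℝ) - 4) ≤ ((n : ℝ) - 2 * k) ^ 2 := (Real.sqrt_le_left hnn).1 hsq
  -- Since `k ≥ 3`, the hypothesis on `k` forces `n ^ 2 - 20 n + 68 ≥ 0`, which fails for `7 ≤ n < 13`.
  have hn13 : (13 : ℝ) ≤ n := by
    have h1 : ((n : ℝ) - 2 * k) ^ 2 ≤ ((n : ℝ) - 6) ^ 2 :=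
      pow_le_pow_left₀ hnn (by linarith) 2
    by_contra! h
    nlinarith [mul_nonneg (sub_nonneg.2 hn') (sub_nonneg.2 h.le)]
  have hs0 : 0 < t₀ ^ 2 := by positivity
  have hs1 : t₀ ^ 2 < 1 := by nlinarith
  have hhalf : t₀ ^ 2 ≤ 1 / 2 :=
    zero_le_half hk' hn13 (by linarith) hd hs0 hs1 hzero
  obtain ⟨G, G', hG, hGe, hG', hode⟩ :=
    hyp_one_ode (b := ((n : ℝ) - 4) / 2) (c := (k : ℝ) / 2) (by linarith) (by linarith) hs0 hs1
  have hder : HasDerivAt (gtil n k) (G' * (2 * t₀)) t₀ := by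
    have h1 : HasDerivAt (fun t : ℝ => t ^ 2) (2 * t₀) t₀ := by
      simpa using hasDerivAt_pow 2 t₀
    exact HasDerivAt.comp t₀ hG' h1
  have hval : gtil n k t₀ = G := hGe
  rw [hder.deriv, hval, gt_iff_lt]
  have h1s : 0 < 1 - t₀ ^ 2 := by linarith
  -- The difference of the two sides is `((k - 2) / G + 1 - 2 t₀²) / (t₀ (1 - t₀²))`.
  have hdiff : G' * (2 * t₀) / G
      - (((n : ℝ) - 2) * t₀ - ((k : ℝ) - 1) * t₀⁻¹) / (1 - t₀ ^ 2)
      = (((k : ℝ) - 2) + (1 - 2 * t₀ ^ 2) * G) / (t₀ * (1 - t₀ ^ 2) * G) := by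
    have := ht0.ne'
    have := hG.ne'
    have := h1s.ne'
    field_simp
    linear_combination 2 * hode
  have hpos : 0 < (((k : ℝ) - 2) + (1 - 2 * t₀ ^ 2) * G) / (t₀ * (1 - t₀ ^ 2) * G) := by
    have : 0 ≤ (1 - 2 * t₀ ^ 2) * G := mul_nonneg (by linarith) hG.le
    have : 0 < ((k : ℝ) - 2) + (1 - 2 * t₀ ^ 2) * G := by linarith
    positivity
  linarith
end
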